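/- For every τ in the complex upper half plane, E_{4,2}(τ) = θ(τ)⁴ = η(2τ)²⁰/(η(τ)η(4τ))⁸. -/

import Mathlib

open Complex

/-- `q = exp(2πiτ)`. -/
noncomputable def qq (τ : ℂ) : ℂ := Complex.exp (2 * Real.pi * Complex.I * τ)

/-- `σ_k(n) = Σ_{d ∣ n} d^k`, as a complex number. -/
noncomputable def sigmaC (k n : ℕ) : ℂ := ∑ d ∈ n.divisors, (d : ℂ) ^ k

/-- Eisenstein series `E₂(τ) = 1 - 24 Σ_{n≥1} σ₁(n) qⁿ`. -/
noncomputable def E₂ (τ : ℂ) : ℂ := 1 - 24 * ∑' n : ℕ, sigmaC 1 (n + 1) * qq τ ^ (n + 1)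

/-- Eisenstein series `E₄(τ) = 1 + 240 Σ_{n≥1} σ₃(n) qⁿ`. -/
noncomputable def E₄ (τ : ℂ) : ℂ := 1 + 240 * ∑' n : ℕ, sigmaC 3 (n + 1) * qq τ ^ (n + 1)

/-- Eisenstein series `E₆(τ) = 1 - 504 Σ_{n≥1} σ₅(n) qⁿ`. -/
noncomputable def E₆ (τ : ℂ) : ℂ := 1 - 504 * ∑' n : ℕ, sigmaC 5 (n + 1) * qq τ ^ (n + 1)

/-- Dedekind eta function `η(τ) = exp(πiτ/12) ∏_{n≥1} (1 - qⁿ)`. -/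
noncomputable def η (τ : ℂ) : ℂ :=
  Complex.exp (Real.pi * Complex.I * τ / 12) * ∏' n : ℕ, (1 - qq τ ^ (n + 1))

/-- Theta function `θ(τ) = Σ_{n ∈ ℤ} q^{n²}`. -/
noncomputable def θ (τ : ℂ) : ℂ := ∑' n : ℤ, qq τ ^ (n ^ 2)

/-- The character `χ₋₄`: `χ₋₄(d) = 1, -1, 0` according as `d ≡ 1, 3, 0/2 (mod 4)`. -/
noncomputable def χ₄ (d : ℕ) : ℂ := if d % 4 = 1 then 1 else if d % 4 = 3 then -1 else 0

/-- The character `χ₋₃`: `χ₋₃(d) = 1, -1, 0` according as `d ≡ 1, 2, 0 (mod 3)`. -/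
noncomputable def χ₃ (d : ℕ) : ℂ := if d % 3 = 1 then 1 else if d % 3 = 2 then -1 else 0

/-- `E_{1,-4}(τ) = 1/4 + Σ_{n≥1} (Σ_{d∣n} χ₋₄(d)) qⁿ`. -/
noncomputable def E₁₄ (τ : ℂ) : ℂ :=
  1 / 4 + ∑' n : ℕ, (∑ d ∈ (n + 1).divisors, χ₄ d) * qq τ ^ (n + 1)

/-- `E_{1,-3}(τ) = 1/6 + Σ_{n≥1} (Σ_{d∣n} χ₋₃(d)) qⁿ`. -/
noncomputable def E₁₃ (τ : ℂ) : ℂ :=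
  1 / 6 + ∑' n : ℕ, (∑ d ∈ (n + 1).divisors, χ₃ d) * qq τ ^ (n + 1)

/-- `E_{2,2}(τ) = 2E₂(2τ) - E₂(τ)`. -/
noncomputable def E₂₂ (τ : ℂ) : ℂ := 2 * E₂ (2 * τ) - E₂ τ

/-- `E_{2,4}(τ) = (4E₄(2τ) - E₄(τ))/3`. -/
noncomputable def E₂₄ (τ : ℂ) : ℂ := (4 * E₄ (2 * τ) - E₄ τ) / 3

/-- `E_{3,2}(τ) = (3E₂(3τ) - E₂(τ))/2`. -/
noncomputable def E₃₂ (τ : ℂ) : ℂ := (3 * E₂ (3 * τ) - E₂ τ) / 2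

/-- `E_{3,4}(τ) = (9E₄(3τ) - E₄(τ))/8`. -/
noncomputable def E₃₄ (τ : ℂ) : ℂ := (9 * E₄ (3 * τ) - E₄ τ) / 8

/-- `E_{4,2}(τ) = (4E₂(4τ) - E₂(τ))/3`. -/
noncomputable def E₄₂ (τ : ℂ) : ℂ := (4 * E₂ (4 * τ) - E₂ τ) / 3

/-- `E'_{4,2}(τ) = 4E₂(4τ) - 4E₂(2τ) + E₂(τ)`. -/
noncomputable def E₄₂' (τ : ℂ) : ℂ := 4 * E₂ (4 * τ) - 4 * E₂ (2 * τ) + E₂ τ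

/-- `f_{1,j}(τ) = 2E₂(τ) - ((3+(-1)ʲi√3)/6)E₂(τ/2) - ((3-(-1)ʲi√3)/6)E₂((τ+1)/2)`. -/
noncomputable def f₁ (j : ℕ) (τ : ℂ) : ℂ :=
  2 * E₂ τ - ((3 + (-1 : ℂ) ^ j * Complex.I * Real.sqrt 3) / 6) * E₂ (τ / 2)
    - ((3 - (-1 : ℂ) ^ j * Complex.I * Real.sqrt 3) / 6) * E₂ ((τ + 1) / 2)

/-- `g_{1,j}(τ) = (3/2)E₂(τ) - (1/4) Σ_{0≤m≤2, m≢j (mod 3)} E₂((τ+m)/3)`. -/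
noncomputable def g₁ (j : ℕ) (τ : ℂ) : ℂ :=
  (3 / 2) * E₂ τ -
    (1 / 4) * ∑ m ∈ (Finset.range 3).filter (fun m => ¬ m % 3 = j % 3), E₂ ((τ + m) / 3)

/-- `f_{2,j}(τ) = 4E_{1,-4}(τ) + (-1)ʲ·2i·(E_{1,-4}(τ/2) - E_{1,-4}((τ+1)/2))`. -/
noncomputable def f₂ (j : ℕ) (τ : ℂ) : ℂ :=
  4 * E₁₄ τ + (-1 : ℂ) ^ j * 2 * Complex.I * (E₁₄ (τ / 2) - E₁₄ ((τ + 1) / 2))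

/-- `f_{3,j}(τ) = 6E_{1,-3}(2τ) + (-1)ʲ·i√3·(E_{1,-3}(τ/2) - E_{1,-3}((τ+1)/2))`. -/
noncomputable def f₃ (j : ℕ) (τ : ℂ) : ℂ :=
  6 * E₁₃ (2 * τ) +
    (-1 : ℂ) ^ j * Complex.I * Real.sqrt 3 * (E₁₃ (τ / 2) - E₁₃ ((τ + 1) / 2))

/-- `f_{4,j}(τ) = θ(τ/2 - (-1)ʲ/4)`. -/
noncomputable def f₄ (j : ℕ) (τ : ℂ) : ℂ := θ (τ / 2 - (-1 : ℂ) ^ j / 4)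

/-- `g_{4,j}(τ) = 2θ(2τ)² - θ((τ+j)/2)²`. -/
noncomputable def g₄ (j : ℕ) (τ : ℂ) : ℂ := 2 * θ (2 * τ) ^ 2 - θ ((τ + j) / 2) ^ 2

/-- `E_{3,-3,1}(τ) = -1/9 + Σ_{n≥1} (Σ_{d∣n} d²χ₋₃(d)) qⁿ`. -/
noncomputable def E₃₃₁ (τ : ℂ) : ℂ :=
  -(1 / 9) + ∑' n : ℕ, (∑ d ∈ (n + 1).divisors, (d : ℂ) ^ 2 * χ₃ d) * qq τ ^ (n + 1)

/-- `E_{3,1,-3}(τ) = Σ_{n≥1} (Σ_{d∣n} d²χ₋₃(n/d)) qⁿ`. -/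
noncomputable def E₃₁₃ (τ : ℂ) : ℂ :=
  ∑' n : ℕ, (∑ d ∈ (n + 1).divisors, (d : ℂ) ^ 2 * χ₃ ((n + 1) / d)) * qq τ ^ (n + 1)

open Filter Topology Asymptotics
open UpperHalfPlane hiding I
open scoped MatrixGroups Manifold

/-- The filter of neighbourhoods of `i∞` in `ℂ`. -/
local notation "i∞" => comap Complex.im atTop

theorem neg_one_div_im_pos {z : ℂ} (hz : 0 < z.im) : 0 < (-1 / z).im := by
  have := UpperHalfPlane.im_inv_neg_coe_pos ⟨z, hz⟩
  simpa [neg_div, inv_neg] using this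

theorem ne_zero_of_im_pos {z : ℂ} (hz : 0 < z.im) : z ≠ 0 := by
  rintro rfl
  simp at hz

theorem eventually_im_pos : ∀ᶠ z : ℂ in i∞, 0 < z.im :=
  tendsto_comap.eventually (eventually_gt_atTop 0)

open scoped ModularForm in
/-- A holomorphic function on the upper half plane which is invariant under `z ↦ z + 2` and
`z ↦ -1 / z`, vanishes at `i∞` and is bounded at the cusp `1` is zero. -/
theorem eq_zero_of_invariant {f : ℂ → ℂ} (hd : ∀ z : ℂ, 0 < z.im → DifferentiableAt ℂ f z)
    (hT : ∀ z : ℂ, 0 < z.im → f (z + 2) = f z) (hS : ∀ z : ℂ, 0 < z.im → f (-1 / z) = f z)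
    (h0 : Tendsto f i∞ (𝓝 0)) (h1 : (fun z ↦ f (1 + -1 / z)) =O[i∞] (fun _ ↦ (1 : ℝ)))
    {z : ℂ} (hz : 0 < z.im) : f z = 0 := by
  have him1 {z : ℂ} (hz : 0 < z.im) : 0 < (z + 1).im := by simpa
  have himS {z : ℂ} (hz : 0 < z.im) : 0 < (1 + -1 / z).im := by
    simpa using neg_one_div_im_pos hz
  have hd1 (z : ℂ) (hz : 0 < z.im) : DifferentiableAt ℂ (fun z ↦ f (z + 1)) z :=
    (hd _ (him1 hz)).comp z (by fun_prop)
  have hdS (z : ℂ) (hz : 0 < z.im) : DifferentiableAt ℂ (fun z ↦ f (1 + -1 / z)) z :=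
    (hd _ (himS hz)).comp z (by fun_prop (disch := exact ne_zero_of_im_pos hz))
  set P : ℂ → ℂ := fun z ↦ f z * f (z + 1) * f (1 + -1 / z) with hP
  have hPT (z : ℂ) (hz : 0 < z.im) : P (z + 1) = P z := by
    have h : f (1 + -1 / (z + 1)) = f (1 + -1 / z) := by
      have hz0 := ne_zero_of_im_pos hz
      have hz1 := ne_zero_of_im_pos (him1 hz)
      have hw : 0 < (-1 / z - 1).im := by simpa using neg_one_div_im_pos hz
      rw [show 1 + -1 / z = (-1 / z - 1) + 2 by ring, hT _ hw, ← hS _ hw]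
      congr 1
      rw [show -1 / z - 1 = -(z + 1) / z by field_simp; ring]
      field_simp
      ring
    simp only [hP, h, show z + 1 + 1 = z + 2 by ring, hT z hz]
    ring
  have hPS (z : ℂ) (hz : 0 < z.im) : P (-1 / z) = P z := by
    have hz0 := ne_zero_of_im_pos hz
    simp only [hP, hS z hz, show -1 / (-1 / z) = z by field_simp]
    rw [add_comm (-1 / z), add_comm 1 z]
    ring
  have hP0 : Tendsto P i∞ (𝓝 0) := by
    have h2 : Tendsto (fun z ↦ f (z + 1)) i∞ (𝓝 0) := by
      refine h0.comp (tendsto_comap_iff.mpr ?_)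
      simpa [Function.comp_def] using tendsto_comap
    have h3 : Tendsto (fun z ↦ f z * f (z + 1)) i∞ (𝓝 0) := by simpa using h0.mul h2
    rw [← isLittleO_one_iff ℝ] at h3 ⊢
    simpa using h3.mul_isBigO h1
  have hPℍ : Tendsto (fun z : ℍ ↦ P z) atImInfty (𝓝 0) := hP0.comp tendsto_coe_atImInfty
  have hslash : ∀ γ : SL(2, ℤ), (fun z : ℍ ↦ P z) ∣[(0 : ℤ)] γ = fun z : ℍ ↦ P z := by
    refine SlashInvariantForm.slash_action_generators_SL2Z ?_ ?_
    · ext z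
      have := hPS z z.2
      rw [ModularForm.SL_slash_apply, UpperHalfPlane.modular_S_smul]
      simpa [neg_div, inv_neg] using this
    · ext z
      have := hPT z z.2
      rw [ModularForm.SL_slash_apply, UpperHalfPlane.modular_T_smul]
      simpa [add_comm] using this
  let F : ModularForm 𝒮ℒ 0 :=
    { toFun := fun z ↦ P z
      slash_action_eq' := fun _ ⟨γ, hγ⟩ ↦ hγ ▸ hslash γ
      holo' := by
        rw [UpperHalfPlane.mdifferentiable_iff]
        refine DifferentiableOn.congr (f := P) (fun z hz ↦ ?_) fun z hz ↦ ?_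
        · exact (((hd z hz).mul (hd1 z hz)).mul (hdS z hz)).differentiableWithinAt
        · simp [ofComplex_apply_of_im_pos hz]
      bdd_at_cusps' := fun hc ↦ by
        rw [Subgroup.IsArithmetic.isCusp_iff_isCusp_SL2Z] at hc
        rw [OnePoint.isBoundedAt_iff_forall_SL2Z hc]
        intro γ _
        rw [hslash]
        exact hPℍ.isBigO_one ℝ }
  obtain ⟨c, hc⟩ := ModularFormClass.levelOne_weight_zero_const F
  have hPc (z : ℍ) : P z = c := congrFun hc z
  obtain rfl : c = 0 := by
    simp only [hPc] at hPℍ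
    exact tendsto_const_nhds_iff.mp hPℍ
  have han {g : ℂ → ℂ} (hg : ∀ z : ℂ, 0 < z.im → DifferentiableAt ℂ g z) :
      AnalyticOnNhd ℂ g upperHalfPlaneSet :=
    DifferentiableOn.analyticOnNhd (fun z hz ↦ (hg z hz).differentiableWithinAt)
      isOpen_upperHalfPlaneSet
  have hconn : IsPreconnected upperHalfPlaneSet :=
    (convex_halfSpace_im_gt 0).isPreconnected
  rcases (han fun z hz ↦ (hd z hz).mul (hd1 z hz)).eq_zero_or_eq_zero_of_mul_eq_zero (han hdS)
    (fun z hz ↦ hPc ⟨z, hz⟩) hconn with h | h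
  · rcases (han hd).eq_zero_or_eq_zero_of_mul_eq_zero (han hd1) (fun z hz ↦ h z hz) hconn
      with h | h
    · exact h z hz
    · simpa using h (z - 1) (by simpa)
  · have hw : 0 < (z - 1).im := by simpa
    have := h (-1 / (z - 1)) (neg_one_div_im_pos hw)
    have hz1 := ne_zero_of_im_pos hw
    rwa [show (1 : ℂ) + -1 / (-1 / (z - 1)) = z by field_simp; ring] at this

/-- Two holomorphic functions on the upper half plane with the same transformation behaviour
under `z ↦ z + 2` and `z ↦ -1 / z` and the same nonzero limit at `i∞` agree, if the second does
not vanish and dominates the first at the cusp `1`. -/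
theorem eq_of_transform {f g : ℂ → ℂ} {u : ℂ → ℝ}
    (hfd : ∀ z : ℂ, 0 < z.im → DifferentiableAt ℂ f z)
    (hgd : ∀ z : ℂ, 0 < z.im → DifferentiableAt ℂ g z)
    (hg : ∀ z : ℂ, 0 < z.im → g z ≠ 0)
    (hfT : ∀ z : ℂ, 0 < z.im → f (z + 2) = f z) (hgT : ∀ z : ℂ, 0 < z.im → g (z + 2) = g z)
    (hfS : ∀ z : ℂ, 0 < z.im → f (-1 / z) = -z ^ 2 * f z)
    (hgS : ∀ z : ℂ, 0 < z.im → g (-1 / z) = -z ^ 2 * g z)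
    (hf0 : Tendsto f i∞ (𝓝 1)) (hg0 : Tendsto g i∞ (𝓝 1))
    (hf1 : (fun z ↦ f (1 + -1 / z)) =O[i∞] u) (hg1 : u =O[i∞] (fun z ↦ g (1 + -1 / z)))
    {z : ℂ} (hz : 0 < z.im) : f z = g z := by
  have key := eq_zero_of_invariant (f := fun z ↦ f z / g z - 1)
    (fun z hz ↦ ((hfd z hz).div (hgd z hz) (hg z hz)).sub_const 1)
    (fun z hz ↦ by rw [hfT z hz, hgT z hz])
    (fun z hz ↦ by
      have := ne_zero_of_im_pos hz
      have := hg z hz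
      simp only [hfS z hz, hgS z hz]
      field_simp)
    (by simpa using (hf0.div hg0 one_ne_zero).sub_const 1)
    (by
      refine IsBigO.sub ?_ (isBigO_const_const _ one_ne_zero _)
      refine ((hf1.trans hg1).mul (isBigO_refl (fun z ↦ (g (1 + -1 / z))⁻¹) _)).trans ?_
      refine IsBigO.of_bound 1 (eventually_im_pos.mono fun z hz ↦ ?_)
      have hw : 0 < (1 + -1 / z).im := by simpa using neg_one_div_im_pos hz
      simp [mul_inv_cancel₀ (hg _ hw)])
    hz
  have := hg z hz
  field_simp at key
  linear_combination key

theorem tendsto_im_atTop_of_smul_add {a : ℝ} (ha : 0 < a) (b : ℝ) :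
    Tendsto (fun z : ℂ ↦ a * z + b) i∞ i∞ := by
  rw [tendsto_comap_iff]
  simpa [Function.comp_def] using tendsto_comap.const_mul_atTop ha

theorem norm_qq (z : ℂ) : ‖qq z‖ = Real.exp (-(2 * Real.pi * z.im)) := by
  simp [qq, Complex.norm_exp]

theorem tendsto_qq : Tendsto qq i∞ (𝓝 0) := by
  rw [tendsto_zero_iff_norm_tendsto_zero]
  simp only [norm_qq]
  exact Real.tendsto_exp_neg_atTop_nhds_zero.comp
    (tendsto_comap.const_mul_atTop (by positivity))

theorem qq_add_one (z : ℂ) : qq (z + 1) = qq z := by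
  simp [qq, mul_add, Complex.exp_add]

theorem eta_eq (z : ℂ) : η z = ModularForm.eta z := by
  simp only [η, ModularForm.eta, ModularForm.eta_q_eq_pow, qq, Function.Periodic.qParam]
  congr 2
  push_cast
  ring

theorem eta_ne_zero {z : ℂ} (hz : 0 < z.im) : η z ≠ 0 := by
  rw [eta_eq]
  exact ModularForm.eta_ne_zero hz

theorem differentiableAt_eta {z : ℂ} (hz : 0 < z.im) : DifferentiableAt ℂ η z := by
  rw [funext eta_eq]
  exact ModularForm.differentiableAt_eta_of_mem_upperHalfPlaneSet hz

theorem tendsto_tprod_qq : Tendsto (fun z ↦ ∏' n : ℕ, (1 - qq z ^ (n + 1))) i∞ (𝓝 1) := by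
  have h : ContinuousAt (fun q : ℂ ↦ ∏' n : ℕ, (1 - q ^ (n + 1))) 0 :=
    (ModularForm.differentiableOn_tprod_one_sub_pow.differentiableAt
      (Metric.isOpen_ball.mem_nhds (Metric.mem_ball_self one_pos))).continuousAt
  simpa [Function.comp_def] using h.tendsto.comp tendsto_qq

theorem eta_add_one (z : ℂ) : η (z + 1) = Complex.exp (Real.pi * I / 12) * η z := by
  simp only [η, qq_add_one, ← mul_assoc, ← Complex.exp_add]
  congr 2
  ring

theorem eta_neg_one_div_pow_four {z : ℂ} (hz : 0 < z.im) :
    η (-1 / z) ^ 4 = -z ^ 2 * η z ^ 4 := by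
  have h : ModularForm.eta (-1 / z) = _ := ModularForm.eta_comp_eq_csqrt_I_inv hz
  have hsq (w : ℂ) (hw : w ≠ 0) : Complex.sqrt w ^ 4 = w ^ 2 := by
    rw [_root_.sqrt_eq_exp hw, ← Complex.exp_nat_mul]
    rw [show ((4 : ℕ) : ℂ) * (Complex.log w / 2) = (2 : ℕ) * Complex.log w by push_cast; ring,
      Complex.exp_nat_mul, Complex.exp_log hw]
  rw [eta_eq, eta_eq, h]
  simp only [Pi.smul_apply, Pi.mul_apply, smul_eq_mul, mul_pow, inv_pow,
    hsq I I_ne_zero, hsq z (ne_zero_of_im_pos hz), I_sq]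
  ring

/-- The eta quotient of the theorem, in the variable `τ = z / 2`. -/
noncomputable def etaQuotient (z : ℂ) : ℂ := η z ^ 20 / (η (z / 2) * η (2 * z)) ^ 8

theorem half_im_pos {z : ℂ} (hz : 0 < z.im) : 0 < (z / 2).im := by
  simpa using hz

theorem two_mul_im_pos {z : ℂ} (hz : 0 < z.im) : 0 < (2 * z).im := by
  simpa using hz

theorem etaQuotient_ne_zero {z : ℂ} (hz : 0 < z.im) : etaQuotient z ≠ 0 :=
  div_ne_zero (pow_ne_zero _ (eta_ne_zero hz)) (pow_ne_zero _ (mul_ne_zero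
    (eta_ne_zero (half_im_pos hz)) (eta_ne_zero (two_mul_im_pos hz))))

theorem differentiableAt_etaQuotient {z : ℂ} (hz : 0 < z.im) :
    DifferentiableAt ℂ etaQuotient z := by
  have h1 : DifferentiableAt ℂ (fun z ↦ η (z / 2)) z :=
    (differentiableAt_eta (half_im_pos hz)).comp (f := fun z ↦ z / 2) z (by fun_prop)
  have h2 : DifferentiableAt ℂ (fun z ↦ η (2 * z)) z :=
    (differentiableAt_eta (two_mul_im_pos hz)).comp (f := fun z ↦ 2 * z) z (by fun_prop)
  exact ((differentiableAt_eta hz).pow 20).div ((h1.mul h2).pow 8) (pow_ne_zero _ (mul_ne_zero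
    (eta_ne_zero (half_im_pos hz)) (eta_ne_zero (two_mul_im_pos hz))))

theorem etaQuotient_add_two (z : ℂ) : etaQuotient (z + 2) = etaQuotient z := by
  have h1 : (z + 2) / 2 = z / 2 + 1 := by ring
  have h2 : z + 2 = z + 1 + 1 := by ring
  have h3 : 2 * (z + 1 + 1) = 2 * z + 1 + 1 + 1 + 1 := by ring
  rw [etaQuotient, etaQuotient, h1, h2, h3]
  simp only [eta_add_one]
  set ω := Complex.exp (Real.pi * I / 12) with hω
  have : ω ≠ 0 := Complex.exp_ne_zero _
  rw [show (ω * η (z / 2) * (ω * (ω * (ω * (ω * η (2 * z)))))) ^ 8 =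
    ω ^ 40 * (η (z / 2) * η (2 * z)) ^ 8 by ring,
    show (ω * (ω * η z)) ^ 20 = ω ^ 40 * η z ^ 20 by ring,
    mul_div_mul_left _ _ (pow_ne_zero _ this)]

theorem etaQuotient_neg_one_div {z : ℂ} (hz : 0 < z.im) :
    etaQuotient (-1 / z) = -z ^ 2 * etaQuotient z := by
  have h1 := eta_neg_one_div_pow_four (half_im_pos hz)
  have h2 := eta_neg_one_div_pow_four (two_mul_im_pos hz)
  have h0 := eta_neg_one_div_pow_four hz
  have hz0 := ne_zero_of_im_pos hz
  rw [etaQuotient, etaQuotient, show -1 / z / 2 = -1 / (2 * z) by field_simp,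
    show 2 * (-1 / z) = -1 / (z / 2) by field_simp, mul_pow, mul_pow,
    show 20 = 4 * 5 by rfl, show 8 = 4 * 2 by rfl]
  simp only [pow_mul, h0, h1, h2]
  have := eta_ne_zero (half_im_pos hz)
  have := eta_ne_zero (two_mul_im_pos hz)
  field_simp

theorem tendsto_etaQuotient : Tendsto etaQuotient i∞ (𝓝 1) := by
  have h1 := tendsto_tprod_qq.comp (tendsto_im_atTop_of_smul_add (a := 1 / 2) (by norm_num) 0)
  have h2 := tendsto_tprod_qq.comp (tendsto_im_atTop_of_smul_add (a := 2) (by norm_num) 0)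
  have h := (tendsto_tprod_qq.pow 20).div ((h1.mul h2).pow 8) (by simp)
  simp only [Function.comp_def, mul_one, one_pow, div_one] at h
  refine h.congr fun z ↦ ?_
  simp only [etaQuotient, η, Pi.div_apply]
  rw [show ((1 / 2 : ℝ) : ℂ) * z + (0 : ℝ) = z / 2 by push_cast; ring,
    show ((2 : ℝ) : ℂ) * z + (0 : ℝ) = 2 * z by push_cast; ring,
    mul_mul_mul_comm, ← Complex.exp_add, mul_pow (Complex.exp _), mul_pow (Complex.exp _),
    ← Complex.exp_nat_mul, ← Complex.exp_nat_mul,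
    show ((20 : ℕ) : ℂ) * (Real.pi * I * z / 12) =
      (8 : ℕ) * (Real.pi * I * (z / 2) / 12 + Real.pi * I * (2 * z) / 12) by push_cast; ring,
    mul_div_mul_left _ _ (Complex.exp_ne_zero _)]

theorem norm_eta (z : ℂ) :
    ‖η z‖ = Real.exp (-(Real.pi * z.im / 12)) * ‖∏' n : ℕ, (1 - qq z ^ (n + 1))‖ := by
  rw [η, norm_mul, Complex.norm_exp]
  congr 2
  rw [show (Real.pi : ℂ) * I * z / 12 = ((Real.pi / 12 : ℝ) : ℂ) * (I * z) by push_cast; ring,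
    Complex.re_ofReal_mul]
  simp
  ring

theorem norm_exp_pi_mul_I_div_twelve : ‖Complex.exp (Real.pi * I / 12)‖ = 1 := by
  rw [show (Real.pi : ℂ) * I / 12 = ((Real.pi / 12 : ℝ) : ℂ) * I by push_cast; ring]
  exact Complex.norm_exp_ofReal_mul_I _

theorem norm_eta_add_one (z : ℂ) : ‖η (z + 1)‖ = ‖η z‖ := by
  rw [eta_add_one, norm_mul, norm_exp_pi_mul_I_div_twelve, one_mul]

theorem norm_eta_neg_one_div_pow_four {z : ℂ} (hz : 0 < z.im) :
    ‖η (-1 / z)‖ ^ 4 = ‖z‖ ^ 2 * ‖η z‖ ^ 4 := by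
  rw [← norm_pow, eta_neg_one_div_pow_four hz]
  simp

/-- The identity `(1 - 1 / z) / 2 = -1 / (-1 / ((z - 1) / 2) - 2)`, which expresses
the action of `z ↦ (1 - 1 / z) / 2` through `z ↦ -1 / z`, translations and `(z - 1) / 2`. -/
theorem half_one_sub_inv_eq {z : ℂ} (hz : 0 < z.im) :
    (1 + -1 / z) / 2 = -1 / (-1 / ((z - 1) / 2) - 2) := by
  have h1 : z - 1 ≠ 0 := ne_zero_of_im_pos (by simpa)
  have h0 := ne_zero_of_im_pos hz
  rw [show -1 / ((z - 1) / 2) - 2 = -(2 * z) / (z - 1) by field_simp; ring]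
  field_simp
  ring

theorem isBigO_etaQuotient :
    (fun z : ℂ ↦ ‖z‖ ^ 2 * Real.exp (-(Real.pi * z.im)))
      =O[i∞] fun z ↦ etaQuotient (1 + -1 / z) := by
  set p : ℂ → ℂ := fun z ↦ ∏' n : ℕ, (1 - qq z ^ (n + 1)) with hp
  have key (z : ℂ) (hz : 0 < z.im) : ‖etaQuotient (1 + -1 / z)‖ =
      16 * (‖p z‖ ^ 20 / (‖p ((z - 1) / 2)‖ * ‖p (z / 2)‖) ^ 8) *
        (‖z‖ ^ 2 * Real.exp (-(Real.pi * z.im))) := by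
    have hv : 0 < ((z - 1) / 2).im := by simpa using hz
    have hu : 0 < (-1 / ((z - 1) / 2) - 2).im := by simpa using neg_one_div_im_pos hv
    have hz0 := ne_zero_of_im_pos hz
    have hz1 : z - 1 ≠ 0 := ne_zero_of_im_pos (by simpa)
    have e0 : ‖η (1 + -1 / z)‖ ^ 4 = ‖z‖ ^ 2 * ‖η z‖ ^ 4 := by
      rw [add_comm, norm_eta_add_one, norm_eta_neg_one_div_pow_four hz]
    have e1 : ‖η (2 * (1 + -1 / z))‖ ^ 4 = ‖z‖ ^ 2 / 4 * ‖η (z / 2)‖ ^ 4 := by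
      rw [show 2 * (1 + -1 / z) = -1 / (z / 2) + 1 + 1 by field_simp; ring,
        norm_eta_add_one, norm_eta_add_one, norm_eta_neg_one_div_pow_four (half_im_pos hz),
        norm_div, div_pow]
      norm_num
    have e2 : ‖η ((1 + -1 / z) / 2)‖ ^ 4 = ‖z‖ ^ 2 * ‖η ((z - 1) / 2)‖ ^ 4 := by
      rw [half_one_sub_inv_eq hz, norm_eta_neg_one_div_pow_four hu,
        ← norm_eta_add_one (_ - 2), ← norm_eta_add_one (_ - 2 + 1),
        show -1 / ((z - 1) / 2) - 2 + 1 + 1 = -1 / ((z - 1) / 2) by ring,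
        norm_eta_neg_one_div_pow_four hv, ← mul_assoc, ← mul_pow, ← norm_mul,
        show (-1 / ((z - 1) / 2) - 2) * ((z - 1) / 2) = -z by field_simp; ring, norm_neg]
    have hE : Real.exp (-(Real.pi * z.im / 12)) ^ 20 =
        (Real.exp (-(Real.pi * ((z - 1) / 2).im / 12)) *
          Real.exp (-(Real.pi * (z / 2).im / 12))) ^ 8 * Real.exp (-(Real.pi * z.im)) := by
      rw [← Real.exp_add, ← Real.exp_nat_mul, ← Real.exp_nat_mul, ← Real.exp_add]
      congr 1
      simp
      ring
    have hη : ‖η z‖ ^ 20 / (‖η ((z - 1) / 2)‖ * ‖η (z / 2)‖) ^ 8 =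
        ‖p z‖ ^ 20 / (‖p ((z - 1) / 2)‖ * ‖p (z / 2)‖) ^ 8 * Real.exp (-(Real.pi * z.im)) := by
      rw [norm_eta, norm_eta, norm_eta, mul_mul_mul_comm, mul_pow _ _ 20, mul_pow _ _ 8, hE]
      rw [mul_assoc, mul_div_mul_left _ _ (by positivity)]
      ring
    rw [etaQuotient, norm_div, norm_pow, norm_pow, norm_mul, mul_pow, show 20 = 4 * 5 by rfl,
      show 8 = 4 * 2 by rfl]
    simp only [pow_mul, e0, e1, e2]
    have hz' : ‖z‖ ≠ 0 := norm_ne_zero_iff.mpr hz0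
    have ha := norm_ne_zero_iff.mpr (eta_ne_zero hv)
    have hb := norm_ne_zero_iff.mpr (eta_ne_zero (half_im_pos hz))
    trans 16 * ‖z‖ ^ 2 * (‖η z‖ ^ 20 / (‖η ((z - 1) / 2)‖ * ‖η (z / 2)‖) ^ 8)
    · field_simp
      ring
    · rw [hη]
      ring
  have hlim : Tendsto (fun z ↦ 16 * (‖p z‖ ^ 20 / (‖p ((z - 1) / 2)‖ * ‖p (z / 2)‖) ^ 8))
      i∞ (𝓝 16) := by
    have h1 := tendsto_tprod_qq.comp (tendsto_im_atTop_of_smul_add (a := 1 / 2) (by norm_num) 0)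
    have h2 := tendsto_tprod_qq.comp
      (tendsto_im_atTop_of_smul_add (a := 1 / 2) (by norm_num) (-1 / 2))
    have h := ((tendsto_tprod_qq.norm.pow 20).div
      ((h2.norm.mul h1.norm).pow 8) (by simp)).const_mul 16
    simp only [norm_one, mul_one, one_pow, div_one] at h
    refine h.congr fun z ↦ ?_
    simp only [Function.comp_def, Pi.div_apply, hp]
    rw [show ((1 / 2 : ℝ) : ℂ) * z + (0 : ℝ) = z / 2 by push_cast; ring,
      show ((1 / 2 : ℝ) : ℂ) * z + (-1 / 2 : ℝ) = (z - 1) / 2 by push_cast; ring]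
  refine IsBigO.of_bound 1 ?_
  filter_upwards [eventually_im_pos, hlim.eventually (eventually_ge_nhds (show (1 : ℝ) < 16 by norm_num))]
    with z hz hge
  rw [key z hz, one_mul, Real.norm_of_nonneg (by positivity)]
  exact le_mul_of_one_le_left (by positivity) hge

theorem theta_eq_jacobiTheta (z : ℂ) : θ z = jacobiTheta (2 * z) := by
  rw [θ, jacobiTheta]
  refine tsum_congr fun n ↦ ?_
  rw [qq, ← Complex.exp_int_mul]
  congr 1
  push_cast
  ring

theorem neg_I_mul_cpow_half_pow_four (z : ℂ) : ((-I * z) ^ (1 / 2 : ℂ)) ^ 4 = -z ^ 2 := by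
  rw [show (4 : ℕ) = 2 * 2 by rfl, pow_mul, one_div, show (2⁻¹ : ℂ) = ((2 : ℕ) : ℂ)⁻¹ by norm_num,
    Complex.cpow_nat_inv_pow _ two_ne_zero, mul_pow, neg_sq, I_sq]
  ring

theorem jacobiTheta_add_two_pow_four (z : ℂ) : jacobiTheta (z + 2) ^ 4 = jacobiTheta z ^ 4 := by
  rw [add_comm, jacobiTheta_two_add]

theorem jacobiTheta_neg_one_div_pow_four {z : ℂ} (hz : 0 < z.im) :
    jacobiTheta (-1 / z) ^ 4 = -z ^ 2 * jacobiTheta z ^ 4 := by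
  have h := jacobiTheta_S_smul ⟨z, hz⟩
  rw [UpperHalfPlane.modular_S_smul] at h
  rw [show -1 / z = (-z)⁻¹ by rw [inv_neg, neg_div, one_div]]
  refine (congrArg (· ^ 4) h).trans ?_
  simp only [mul_pow, neg_I_mul_cpow_half_pow_four]

theorem tendsto_jacobiTheta_pow_four : Tendsto (fun z ↦ jacobiTheta z ^ 4) i∞ (𝓝 1) := by
  have h : Tendsto (fun z ↦ jacobiTheta z - 1) i∞ (𝓝 0) := by
    refine isBigO_at_im_infty_jacobiTheta_sub_one.trans_tendsto ?_
    simp only [neg_mul]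
    exact Real.tendsto_exp_neg_atTop_nhds_zero.comp (tendsto_comap.const_mul_atTop Real.pi_pos)
  simpa using (h.add_const 1).pow 4

theorem jacobiTheta_one_add_eq (z : ℂ) : jacobiTheta (1 + z) = jacobiTheta₂ (1 / 2) z := by
  rw [jacobiTheta, jacobiTheta₂]
  refine tsum_congr fun n ↦ ?_
  rw [jacobiTheta₂_term, Complex.exp_eq_exp_iff_exists_int]
  obtain ⟨k, hk⟩ := Int.even_mul_pred_self n
  refine ⟨k, ?_⟩
  have : (n : ℂ) * (n - 1) = k + k := by exact_mod_cast hk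
  linear_combination Real.pi * I * this

theorem isBigO_jacobiTheta₂_half_mul_self :
    (fun z : ℂ ↦ jacobiTheta₂ (z / 2) z) =O[i∞] fun _ ↦ (1 : ℝ) := by
  have hs := ((summable_jacobiTheta₂_term_iff (I / 2) I).mpr (by simp)).norm
  refine IsBigO.of_bound (∑' n : ℤ, ‖jacobiTheta₂_term n (I / 2) I‖) ?_
  filter_upwards [tendsto_comap.eventually (eventually_ge_atTop 1)] with z hz
  rw [norm_one, mul_one]
  refine tsum_of_norm_bounded hs.hasSum fun n ↦ ?_
  rw [norm_jacobiTheta₂_term, norm_jacobiTheta₂_term, Real.exp_le_exp]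
  have hn : (0 : ℝ) ≤ n ^ 2 + n := by
    have : 0 ≤ n ^ 2 + n := by
      rcases le_or_gt 0 n with h | h <;> nlinarith
    exact_mod_cast this
  have h2 : (z / 2).im = z.im / 2 := by simp
  have h3 : (I / 2).im = 1 / 2 := by simp
  rw [h2, h3, Complex.I_im]
  nlinarith [mul_nonneg (mul_nonneg Real.pi_pos.le hn) (sub_nonneg.mpr hz)]

theorem isBigO_jacobiTheta_one_add_neg_one_div_pow_four :
    (fun z : ℂ ↦ jacobiTheta (1 + -1 / z) ^ 4)
      =O[i∞] fun z ↦ ‖z‖ ^ 2 * Real.exp (-(Real.pi * z.im)) := by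
  have h : (fun z : ℂ ↦ jacobiTheta (1 + -1 / z) ^ 4) =ᶠ[i∞] fun z ↦
      (-z ^ 2 * Complex.exp (Real.pi * I * z)) * jacobiTheta₂ (z / 2) z ^ 4 := by
    filter_upwards [eventually_im_pos] with z hz
    have hz0 := ne_zero_of_im_pos hz
    have hE : Complex.exp (-Real.pi * I * (z / 2) ^ 2 / z) ^ 4 =
        (Complex.exp (Real.pi * I * z))⁻¹ := by
      rw [← Complex.exp_nat_mul, ← Complex.exp_neg]
      congr 1
      push_cast
      field_simp
      ring
    have hJ := congrArg (· ^ 4) (jacobiTheta₂_functional_equation (z / 2) z)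
    simp only [mul_pow, div_pow, one_pow, neg_I_mul_cpow_half_pow_four] at hJ
    rw [← div_pow, hE, show z / 2 / z = 1 / 2 by field_simp] at hJ
    rw [jacobiTheta_one_add_eq, hJ]
    have := Complex.exp_ne_zero (Real.pi * I * z)
    field_simp
  refine h.trans_isBigO ?_
  have h1 : (fun z : ℂ ↦ -z ^ 2 * Complex.exp (Real.pi * I * z))
      =O[i∞] fun z ↦ ‖z‖ ^ 2 * Real.exp (-(Real.pi * z.im)) := by
    refine IsBigO.of_bound 1 (Eventually.of_forall fun z ↦ ?_)
    simp [Complex.norm_exp]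
  simpa using h1.mul (isBigO_jacobiTheta₂_half_mul_self.pow 4)

theorem E₂_eq_E2 {z : ℂ} (hz : 0 < z.im) : E₂ z = EisensteinSeries.E2 ⟨z, hz⟩ := by
  rw [EisensteinSeries.E2_eq_tsum_cexp, E₂,
    tsum_pnat_eq_tsum_succ (f := fun n : ℕ ↦
      (ArithmeticFunction.sigma 1 n : ℂ) * Complex.exp (2 * Real.pi * I * z) ^ n)]
  simp [sigmaC, ArithmeticFunction.sigma_apply, qq]

theorem differentiableAt_E₂ {z : ℂ} (hz : 0 < z.im) : DifferentiableAt ℂ E₂ z := by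
  have h := UpperHalfPlane.mdifferentiable_iff.mp E2_mdifferentiable
  refine (h.congr fun w hw ↦ ?_).differentiableAt (isOpen_upperHalfPlaneSet.mem_nhds hz)
  simp [ofComplex_apply_of_im_pos hw, E₂_eq_E2 hw]

theorem E₂_add_one (z : ℂ) : E₂ (z + 1) = E₂ z := by
  simp only [E₂, qq_add_one]

theorem exists_E₂_neg_one_div :
    ∃ c : ℂ, ∀ z : ℂ, 0 < z.im → E₂ (-1 / z) = z ^ 2 * E₂ z + c * z := by
  refine ⟨-(1 / (2 * riemannZeta 2) * (2 * Real.pi * I)), fun z hz ↦ ?_⟩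
  have h := congrFun (EisensteinSeries.E2_slash_action ModularGroup.S) ⟨z, hz⟩
  rw [SlashInvariantForm.slash_S_apply] at h
  simp only [Pi.sub_apply, Pi.smul_apply, EisensteinSeries.D2_S, smul_eq_mul] at h
  have hz0 := ne_zero_of_im_pos hz
  rw [E₂_eq_E2 hz, E₂_eq_E2 (neg_one_div_im_pos hz)]
  simp only [show -1 / z = (-z)⁻¹ by rw [inv_neg, neg_div, one_div]]
  rw [zpow_neg, ← div_eq_mul_inv, div_eq_iff (zpow_ne_zero _ hz0)] at h
  rw [h, zpow_ofNat]
  field_simp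
  ring

theorem norm_sigmaC_one_le (n : ℕ) : ‖sigmaC 1 n‖ ≤ n ^ 2 := by
  have h : ‖sigmaC 1 n‖ = (ArithmeticFunction.sigma 1 n : ℕ) := by
    rw [← Complex.norm_natCast]
    simp [sigmaC, ArithmeticFunction.sigma_apply]
  rw [h]
  exact_mod_cast ArithmeticFunction.sigma_le_pow_succ 1 n

theorem isBigO_E₂_sub_one : (fun z ↦ E₂ z - 1) =O[i∞] qq := by
  have hs : Summable fun n : ℕ ↦ ((n + 1 : ℕ) : ℝ) ^ 2 * (1 / 2) ^ n := by
    have := (summable_nat_add_iff 1).mpr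
      (summable_pow_mul_geometric_of_norm_lt_one 2 (r := (1 / 2 : ℝ)) (by norm_num))
    refine (this.mul_right 2).congr fun n ↦ ?_
    rw [pow_succ (1 / 2 : ℝ)]
    ring
  refine IsBigO.of_bound (24 * ∑' n : ℕ, ((n + 1 : ℕ) : ℝ) ^ 2 * (1 / 2) ^ n) ?_
  filter_upwards [tendsto_qq.norm.eventually
    (eventually_le_nhds (show ‖(0 : ℂ)‖ < 1 / 2 by norm_num))] with z hz
  rw [E₂, sub_sub_cancel_left, norm_neg, norm_mul, mul_assoc, ← tsum_mul_right]
  simp only [Complex.norm_ofNat]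
  gcongr
  refine tsum_of_norm_bounded (hs.mul_right _).hasSum fun n ↦ ?_
  rw [norm_mul, norm_pow, pow_succ, ← mul_assoc]
  gcongr
  exact norm_sigmaC_one_le _

theorem tendsto_E₂ : Tendsto E₂ i∞ (𝓝 1) := by
  simpa using (isBigO_E₂_sub_one.trans_tendsto tendsto_qq).add_const 1

/-- The Eisenstein series `E₄₂`, in the variable `τ = z / 2`. -/
noncomputable def eisensteinHalf (z : ℂ) : ℂ := (4 * E₂ (2 * z) - E₂ (z / 2)) / 3

theorem differentiableAt_eisensteinHalf {z : ℂ} (hz : 0 < z.im) :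
    DifferentiableAt ℂ eisensteinHalf z := by
  have h1 : DifferentiableAt ℂ (fun z ↦ E₂ (z / 2)) z :=
    (differentiableAt_E₂ (half_im_pos hz)).comp (f := fun z ↦ z / 2) z (by fun_prop)
  have h2 : DifferentiableAt ℂ (fun z ↦ E₂ (2 * z)) z :=
    (differentiableAt_E₂ (two_mul_im_pos hz)).comp (f := fun z ↦ 2 * z) z (by fun_prop)
  exact ((h2.const_mul 4).sub h1).div_const 3

theorem eisensteinHalf_add_two (z : ℂ) : eisensteinHalf (z + 2) = eisensteinHalf z := by
  rw [eisensteinHalf, eisensteinHalf, show (z + 2) / 2 = z / 2 + 1 by ring,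
    show 2 * (z + 2) = 2 * z + 1 + 1 + 1 + 1 by ring]
  simp only [E₂_add_one]

theorem eisensteinHalf_neg_one_div {z : ℂ} (hz : 0 < z.im) :
    eisensteinHalf (-1 / z) = -z ^ 2 * eisensteinHalf z := by
  obtain ⟨c, hc⟩ := exists_E₂_neg_one_div
  have hz0 := ne_zero_of_im_pos hz
  rw [eisensteinHalf, eisensteinHalf, show -1 / z / 2 = -1 / (2 * z) by field_simp,
    show 2 * (-1 / z) = -1 / (z / 2) by field_simp, hc _ (half_im_pos hz),
    hc _ (two_mul_im_pos hz)]
  ring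

theorem tendsto_eisensteinHalf : Tendsto eisensteinHalf i∞ (𝓝 1) := by
  have h1 := tendsto_E₂.comp (tendsto_im_atTop_of_smul_add (a := 1 / 2) (by norm_num) 0)
  have h2 := tendsto_E₂.comp (tendsto_im_atTop_of_smul_add (a := 2) (by norm_num) 0)
  have h := ((h2.const_mul 4).sub h1).div_const 3
  rw [show ((4 : ℂ) * 1 - 1) / 3 = 1 by norm_num] at h
  refine h.congr fun z ↦ ?_
  rw [eisensteinHalf, Function.comp_apply, Function.comp_apply,
    show ((1 / 2 : ℝ) : ℂ) * z + (0 : ℝ) = z / 2 by push_cast; ring,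
    show ((2 : ℝ) : ℂ) * z + (0 : ℝ) = 2 * z by push_cast; ring]

theorem eisensteinHalf_one_add_neg_one_div {z : ℂ} (hz : 0 < z.im) :
    eisensteinHalf (1 + -1 / z) = z ^ 2 / 3 * (E₂ (z / 2) - E₂ ((z - 1) / 2)) := by
  obtain ⟨c, hc⟩ := exists_E₂_neg_one_div
  have hv : 0 < ((z - 1) / 2).im := by simpa using hz
  have hu : 0 < (-1 / ((z - 1) / 2) - 2).im := by simpa using neg_one_div_im_pos hv
  have hz0 := ne_zero_of_im_pos hz
  have hz1 : z - 1 ≠ 0 := ne_zero_of_im_pos (by simpa)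
  have e1 : E₂ (2 * (1 + -1 / z)) = (z / 2) ^ 2 * E₂ (z / 2) + c * (z / 2) := by
    rw [show 2 * (1 + -1 / z) = -1 / (z / 2) + 1 + 1 by field_simp; ring, E₂_add_one, E₂_add_one,
      hc _ (half_im_pos hz)]
  have e2 : E₂ ((1 + -1 / z) / 2) = z ^ 2 * E₂ ((z - 1) / 2) + 2 * c * z := by
    rw [half_one_sub_inv_eq hz, hc _ hu, ← E₂_add_one (_ - 2), ← E₂_add_one (_ - 2 + 1),
      show -1 / ((z - 1) / 2) - 2 + 1 + 1 = -1 / ((z - 1) / 2) by ring, hc _ hv]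
    field_simp
    ring
  rw [eisensteinHalf, e1, e2]
  ring

theorem isBigO_eisensteinHalf :
    (fun z : ℂ ↦ eisensteinHalf (1 + -1 / z))
      =O[i∞] fun z ↦ ‖z‖ ^ 2 * Real.exp (-(Real.pi * z.im)) := by
  have key (b : ℝ) : (fun z : ℂ ↦ E₂ ((1 / 2 : ℝ) * z + b) - 1)
      =O[i∞] fun z ↦ Real.exp (-(Real.pi * z.im)) := by
    refine (isBigO_E₂_sub_one.comp_tendsto
      (tendsto_im_atTop_of_smul_add (a := 1 / 2) (by norm_num) b)).trans
      (IsBigO.of_bound 1 (Eventually.of_forall fun z ↦ ?_))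
    rw [Function.comp_apply, norm_qq, one_mul, Real.norm_of_nonneg (by positivity)]
    apply le_of_eq
    congr 1
    rw [Complex.add_im, Complex.im_ofReal_mul, Complex.ofReal_im]
    ring
  have hsub := (key 0).sub (key (-1 / 2))
  have hsq : (fun z : ℂ ↦ z ^ 2 / 3) =O[i∞] fun z ↦ ‖z‖ ^ 2 := by
    refine IsBigO.of_bound (1 / 3) (Eventually.of_forall fun z ↦ le_of_eq ?_)
    simp
    ring
  refine EventuallyEq.trans_isBigO ?_ (hsq.mul hsub)
  filter_upwards [eventually_im_pos] with z hz
  rw [eisensteinHalf_one_add_neg_one_div hz,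
    show ((1 / 2 : ℝ) : ℂ) * z + (0 : ℝ) = z / 2 by push_cast; ring,
    show ((1 / 2 : ℝ) : ℂ) * z + (-1 / 2 : ℝ) = (z - 1) / 2 by push_cast; ring]
  ring

theorem jacobiTheta_pow_four_eq_etaQuotient {z : ℂ} (hz : 0 < z.im) :
    jacobiTheta z ^ 4 = etaQuotient z :=
  eq_of_transform (f := fun z ↦ jacobiTheta z ^ 4)
    (fun _ hz ↦ (differentiableAt_jacobiTheta hz).pow 4)
    (fun _ ↦ differentiableAt_etaQuotient) (fun _ ↦ etaQuotient_ne_zero)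
    (fun z _ ↦ jacobiTheta_add_two_pow_four z) (fun z _ ↦ etaQuotient_add_two z)
    (fun _ ↦ jacobiTheta_neg_one_div_pow_four) (fun _ ↦ etaQuotient_neg_one_div)
    tendsto_jacobiTheta_pow_four tendsto_etaQuotient
    isBigO_jacobiTheta_one_add_neg_one_div_pow_four isBigO_etaQuotient hz

theorem eisensteinHalf_eq_etaQuotient {z : ℂ} (hz : 0 < z.im) :
    eisensteinHalf z = etaQuotient z :=
  eq_of_transform (fun _ ↦ differentiableAt_eisensteinHalf)
    (fun _ ↦ differentiableAt_etaQuotient) (fun _ ↦ etaQuotient_ne_zero)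
    (fun z _ ↦ eisensteinHalf_add_two z) (fun z _ ↦ etaQuotient_add_two z)
    (fun _ ↦ eisensteinHalf_neg_one_div) (fun _ ↦ etaQuotient_neg_one_div)
    tendsto_eisensteinHalf tendsto_etaQuotient
    isBigO_eisensteinHalf isBigO_etaQuotient hz

theorem stmt16 (τ : ℂ) (hτ : 0 < τ.im) :
    E₄₂ τ = θ τ ^ 4 ∧ θ τ ^ 4 = η (2 * τ) ^ 20 / (η τ * η (4 * τ)) ^ 8 := by
  have hz := two_mul_im_pos hτ
  have h4 : 2 * (2 * τ) = 4 * τ := by ring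
  have h1 : 2 * τ / 2 = τ := by ring
  have hE : E₄₂ τ = eisensteinHalf (2 * τ) := by rw [E₄₂, eisensteinHalf, h4, h1]
  have hη : η (2 * τ) ^ 20 / (η τ * η (4 * τ)) ^ 8 = etaQuotient (2 * τ) := by
    rw [etaQuotient, h4, h1]
  rw [hE, hη, theta_eq_jacobiTheta, jacobiTheta_pow_four_eq_etaQuotient hz]
  exact ⟨eisensteinHalf_eq_etaQuotient hz, rfl⟩
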